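/- Let F_1, F_2, F_3 ∈ ℂ[x_0, …, x_n] be pairwise coprime polynomials, each a product of non-zero homogeneous linear polynomials, such that F_1 + F_2 + F_3 = 0. Then the points of the projective space ℙ(ℂ^{n+1}) determined by all the linear factors of F_1, F_2 and F_3 (each linear factor, viewed as a vector of coefficients up to scalar, gives a projective point) lie in a projective subspace of dimension at most 4; equivalently, the ℂ-linear span of all the linear factors has dimension at most 5. -/

import Mathlib

/-!
Let `F₀ + F₁ + F₂ = 0` be products of `d` linear forms whose span has dimension `r`. In coordinates
on that span, minus the Hessian of `log (F₀ / F₁)` is `∑ ε i • c i (c i)ᵀ / l i ^ 2` with weights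
`ε = ±1`. Since the `F i` sum to zero and are homogeneous of the same degree, the matrix
determinant lemma gives `F₀ ^ r * det (H₀ - H₁) = (-F₂) ^ r * det (H₂ - H₁)` for their logarithmic
Hessians `H i`. Each linear form is only a double pole of these determinants, so
`P = (F₀ * F₁) ^ 2 * det (H₀ - H₁)` is a form of degree `2 * (2 * d - r)`, and by coprimality
`F₂ ^ r ∣ F₂ ^ 2 * P`. If `P ≠ 0`, then `r * d ≤ 2 * d + 2 * (2 * d - r)`, that is, `r ≤ 5`.

To see that `P ≠ 0`, choose a basis adapted to a flag of spans of linear forms along which the total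
weight jumps at every step. Letting the basis vectors tend to zero at increasing rates, the rescaled
matrix becomes diagonal with these jumps as its entries.
-/

open Finset Matrix

namespace LinearFactors

section LogHessian

variable {ι n L : Type*} [Fintype ι] [Field L]

/-- The logarithmic gradient `∑ ε i • c i / y i` at a point of `∏ y i ^ ε i`, where `y i` is the
value there of a linear form with coefficient vector `c i`. -/
def logGrad (ε : ι → ℤ) (c : ι → n → L) (y : ι → L) (a : n) : L :=
  ∑ i, (ε i : L) * (c i a / y i)

/-- Minus the Hessian of `log (∏ y i ^ ε i)` at a point, where `y i` is the value there of a linear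
form with coefficient vector `c i`; the sign makes every weight enter positively. -/
def logHessian (ε : ι → ℤ) (c : ι → n → L) (y : ι → L) : Matrix n n L :=
  Matrix.of fun a b => ∑ i, (ε i : L) * (c i a * c i b / y i ^ 2)

lemma logHessian_mulVec [Fintype n] (ε : ι → ℤ) {c : ι → n → L} {y : ι → L} {z : n → L}
    (hy : ∀ i, y i ≠ 0) (hz : ∀ i, c i ⬝ᵥ z = y i) :
    logHessian ε c y *ᵥ z = logGrad ε c y := by
  ext a
  simp only [mulVec, dotProduct, logHessian, of_apply, logGrad, sum_mul]
  rw [sum_comm]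
  refine sum_congr rfl fun i _ => ?_
  calc ∑ b, (ε i : L) * (c i a * c i b / y i ^ 2) * z b
      = (ε i : L) * c i a / y i ^ 2 * (c i ⬝ᵥ z) := by
        rw [dotProduct, mul_sum]; exact sum_congr rfl fun b _ => by ring
    _ = (ε i : L) * (c i a / y i) := by rw [hz]; field_simp [hy i]

lemma logGrad_dotProduct [Fintype n] (ε : ι → ℤ) {c : ι → n → L} {y : ι → L} {z : n → L}
    (hy : ∀ i, y i ≠ 0) (hz : ∀ i, c i ⬝ᵥ z = y i) :
    logGrad ε c y ⬝ᵥ z = ∑ i, (ε i : L) := by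
  simp only [dotProduct, logGrad, sum_mul]
  rw [sum_comm]
  refine sum_congr rfl fun i _ => ?_
  calc ∑ a, (ε i : L) * (c i a / y i) * z a
      = (ε i : L) / y i * (c i ⬝ᵥ z) := by
        rw [dotProduct, mul_sum]; exact sum_congr rfl fun a _ => by ring
    _ = (ε i : L) := by rw [hz]; field_simp [hy i]

lemma logHessian_sumElim_one_neg_one {κ : Type*} [Fintype κ] (c : ι → n → L) (c' : κ → n → L)
    (y : ι → L) (y' : κ → L) :
    logHessian (Sum.elim 1 (-1)) (Sum.elim c c') (Sum.elim y y') =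
      logHessian 1 c y - logHessian 1 c' y' := by
  ext a b
  simp [logHessian, sub_eq_add_neg]

lemma det_logHessian [Fintype n] [DecidableEq n] (ε : ι → ℤ) (c : ι → n → L) (y : ι → L) :
    (logHessian ε c y).det =
      ∑ f : n ↪ ι, (∏ a, (ε (f a) : L) * c (f a) a / y (f a) ^ 2) *
        (Matrix.of fun a => c (f a)).det := by
  have rows : logHessian ε c y = fun a => ∑ i, ((ε i : L) * c i a / y i ^ 2) • c i := by
    ext a b
    simp only [logHessian, of_apply, Finset.sum_apply, Pi.smul_apply, smul_eq_mul]
    exact sum_congr rfl fun i _ => by ring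
  have expand : (logHessian ε c y).det =
      ∑ f : n → ι, (∏ a, (ε (f a) : L) * c (f a) a / y (f a) ^ 2) *
        (Matrix.of fun a => c (f a)).det := by
    rw [rows]
    refine (detRowAlternating.toMultilinearMap.map_sum _).trans (sum_congr rfl fun f _ => ?_)
    exact MultilinearMap.map_smul_univ _ _ _
  rw [expand]
  refine (Fintype.sum_of_injective _ DFunLike.coe_injective _ _ (fun f hf => ?_)
    fun f => rfl).symm
  obtain ⟨a, b, hfab, hab⟩ : ∃ a b, f a = f b ∧ a ≠ b := by
    simpa [Function.Injective] using fun h : Function.Injective f => hf ⟨⟨f, h⟩, rfl⟩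
  rw [det_zero_of_row_eq hab (congrArg c hfab), mul_zero]

/-- Here `h i` is the logarithmic gradient of `f i` and `H i` minus its logarithmic Hessian: the
hypotheses make `H₁ - H₂` a multiple of `(H₃ - H₂) (1 + z wᵀ)` with `w ⬝ z = 0`. -/
lemma pow_mul_det_sub_eq [Fintype n] [DecidableEq n] {f₁ f₂ f₃ δ : L} {h₁ h₂ h₃ z : n → L}
    {H₁ H₂ H₃ : Matrix n n L} (hf₁ : f₁ ≠ 0) (hf : f₁ + f₂ + f₃ = 0)
    (grad : ∀ a, f₁ * h₁ a + f₂ * h₂ a + f₃ * h₃ a = 0)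
    (hess : ∀ a b, f₁ * (h₁ a * h₁ b - H₁ a b) + f₂ * (h₂ a * h₂ b - H₂ a b) +
      f₃ * (h₃ a * h₃ b - H₃ a b) = 0)
    (hH₂ : H₂ *ᵥ z = h₂) (hH₃ : H₃ *ᵥ z = h₃) (hδ₂ : h₂ ⬝ᵥ z = δ) (hδ₃ : h₃ ⬝ᵥ z = δ) :
    f₁ ^ Fintype.card n * (H₁ - H₂).det = (-f₃) ^ Fintype.card n * (H₃ - H₂).det := by
  set w : n → L := (f₂ / f₁) • (h₃ - h₂) with hw
  have hwz : w ⬝ᵥ z = 0 := by simp [hw, smul_dotProduct, sub_dotProduct, hδ₂, hδ₃]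
  have rank_one : f₁ • (H₁ - H₂) = (-f₃) • ((H₃ - H₂) * (1 + vecMulVec z w)) := by
    rw [mul_add, mul_one, mul_vecMulVec, sub_mulVec, hH₂, hH₃]
    ext a b
    simp only [Matrix.smul_apply, Matrix.sub_apply, Matrix.add_apply, vecMulVec_apply,
      Pi.sub_apply, Pi.smul_apply, smul_eq_mul, hw]
    have grad_sub : ∀ a, f₁ * (h₁ a - h₂ a) = -f₃ * (h₃ a - h₂ a) := fun a => by
      linear_combination grad a - h₂ a * hf
    obtain rfl : f₂ = -f₁ - f₃ := by linear_combination hf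
    field_simp
    linear_combination -f₁ * hess a b + f₁ * (h₁ b - h₂ b) * grad_sub a -
      f₃ * (h₃ a - h₂ a) * grad_sub b + f₁ * h₂ a * grad b + f₁ * h₂ b * grad a
  have hdet := congrArg det rank_one
  rwa [det_smul, det_smul, det_mul, vecMulVec_eq Unit, det_one_add_replicateCol_mul_replicateRow,
    hwz, add_zero, mul_one] at hdet

end LogHessian

section ClearedDet

variable {ι n A B : Type*} [Fintype ι] [DecidableEq ι] [Fintype n] [DecidableEq n]
  [CommRing A] [CommRing B]

/-- `(∏ y i) ^ 2` times the determinant of `logHessian ε c y`, as a polynomial expression in the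
data. Only the injective terms of the row expansion survive, which is why the denominators
`y i ^ 2` are needed just once each. -/
noncomputable def clearedDet (ε : ι → ℤ) (c : ι → n → A) (y : ι → A) : A :=
  ∑ f : n ↪ ι, (∏ a, (ε (f a) : A) * c (f a) a) * (Matrix.of fun a => c (f a)).det *
    ∏ i ∈ (univ.map f)ᶜ, y i ^ 2

lemma card_le_of_clearedDet_ne_zero {ε : ι → ℤ} {c : ι → n → A} {y : ι → A}
    (h : clearedDet ε c y ≠ 0) : Fintype.card n ≤ Fintype.card ι :=
  let ⟨f, _⟩ := exists_ne_zero_of_sum_ne_zero h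
  Fintype.card_le_of_embedding f

lemma map_clearedDet (φ : A →+* B) (ε : ι → ℤ) (c : ι → n → A) (y : ι → A) :
    φ (clearedDet ε c y) =
      clearedDet ε (fun i a => φ (c i a)) (fun i => φ (y i)) := by
  simp only [clearedDet, map_sum, map_mul, map_prod, map_pow, map_intCast, φ.map_det]
  rfl

lemma clearedDet_eq_mul_det {L : Type*} [Field L] (ε : ι → ℤ) (c : ι → n → L) {y : ι → L}
    (hy : ∀ i, y i ≠ 0) : clearedDet ε c y = (∏ i, y i) ^ 2 * (logHessian ε c y).det := by
  rw [det_logHessian, clearedDet, mul_sum]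
  refine sum_congr rfl fun f _ => ?_
  have hf : ∏ a, y (f a) ^ 2 ≠ 0 := prod_ne_zero_iff.2 fun a _ => pow_ne_zero _ (hy _)
  rw [← prod_pow, ← prod_mul_prod_compl (univ.map f), prod_map, prod_div_distrib]
  field_simp

lemma clearedDet_scale (ε : ι → ℤ) (c : ι → n → A) (y : ι → A) (ρ : ι → A) (τ : n → A) :
    clearedDet ε (fun i a => ρ i * c i a * τ a) (fun i => ρ i * y i) =
      (∏ i, ρ i) ^ 2 * (∏ a, τ a) ^ 2 * clearedDet ε c y := by
  rw [clearedDet, clearedDet, mul_sum]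
  refine sum_congr rfl fun f _ => ?_
  have hdet : (Matrix.of fun a b => ρ (f a) * c (f a) b * τ b).det =
      (∏ a, ρ (f a)) * (∏ a, τ a) * (Matrix.of fun a => c (f a)).det := by
    rw [mul_assoc, ← det_mul_row, ← det_mul_column]
    exact congrArg det (by ext; simp [mul_comm, mul_left_comm])
  rw [hdet, ← prod_mul_prod_compl (univ.map f) ρ, prod_map]
  simp only [mul_pow, prod_mul_distrib, prod_pow]
  ring

lemma isHomogeneous_clearedDet {K σ : Type*} [CommRing K] (ε : ι → ℤ) (c : ι → n → K)
    {l : ι → MvPolynomial σ K} (hl : ∀ i, (l i).IsHomogeneous 1) :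
    (clearedDet ε (fun i a => MvPolynomial.C (c i a)) l).IsHomogeneous
      (2 * (Fintype.card ι - Fintype.card n)) := by
  refine MvPolynomial.IsHomogeneous.sum _ _ _ fun f _ => ?_
  have hcoeff : (∏ a, (ε (f a) : MvPolynomial σ K) * MvPolynomial.C (c (f a) a)) *
      (Matrix.of fun a b => (MvPolynomial.C (c (f a) b) : MvPolynomial σ K)).det =
      MvPolynomial.C ((∏ a, (ε (f a) : K) * c (f a) a) * (Matrix.of fun a => c (f a)).det) := by
    simp only [map_mul, map_prod, map_intCast, RingHom.map_det]
    rfl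
  have hprod := MvPolynomial.IsHomogeneous.prod (univ.map f)ᶜ (fun i => l i ^ 2) (fun _ => 2)
    fun i _ => by simpa using (hl i).pow 2
  rw [sum_const, card_compl, card_map, card_univ, smul_eq_mul, mul_comm] at hprod
  rw [hcoeff]
  exact hprod.C_mul _

end ClearedDet

section Derivation

variable {k R L : Type*} [CommRing k] [CommRing R] [Algebra k R] [Field L]

lemma map_derivation_prod {ι : Type*} (φ : R →+* L) (D : Derivation k R R) {l : ι → R}
    (s : Finset ι) (hl : ∀ i, φ (l i) ≠ 0) :
    φ (D (∏ i ∈ s, l i)) = φ (∏ i ∈ s, l i) * ∑ i ∈ s, φ (D (l i)) / φ (l i) := by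
  classical
  induction s using Finset.induction_on with
  | empty => simp
  | insert i s hi ih =>
    simp only [prod_insert hi, sum_insert hi, D.leibniz, smul_eq_mul, map_add, map_mul, ih]
    field_simp [hl i]
    ring

lemma map_derivation_derivation_prod {ι : Type*} (φ : R →+* L) (D E : Derivation k R R)
    {l : ι → R} (s : Finset ι) (hl : ∀ i, φ (l i) ≠ 0) (hDE : ∀ i, D (E (l i)) = 0) :
    φ (D (E (∏ i ∈ s, l i))) = φ (∏ i ∈ s, l i) *
      ((∑ i ∈ s, φ (D (l i)) / φ (l i)) * (∑ i ∈ s, φ (E (l i)) / φ (l i)) -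
        ∑ i ∈ s, φ (D (l i)) * φ (E (l i)) / φ (l i) ^ 2) := by
  classical
  induction s using Finset.induction_on with
  | empty => simp
  | insert i s hi ih =>
    simp only [prod_insert hi, sum_insert hi, Derivation.leibniz, smul_eq_mul, map_add, map_mul,
      ih, hDE, map_zero, map_derivation_prod φ _ s hl]
    field_simp [hl i]
    ring

/-- This is `f₀ ^ n * det (H₀ - H₁) = (-f₂) ^ n * det (H₂ - H₁)`, where `f i = ∏ t, l i t` has
logarithmic Hessian `H i`, with the denominators cleared. -/
theorem pow_mul_clearedDet_eq {n : Type*} [Fintype n] [DecidableEq n] [IsDomain R]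
    {ι : Fin 3 → Type*} [∀ i, Fintype (ι i)] [∀ i, DecidableEq (ι i)]
    (D : n → Derivation k R R) (z : n → R) (l : ∀ i, ι i → R) (hl : ∀ i j, l i j ≠ 0)
    (hD : ∀ a b i j, D a (D b (l i j)) = 0) (euler : ∀ i j, ∑ a, D a (l i j) * z a = l i j)
    (hcard : Fintype.card (ι 1) = Fintype.card (ι 2))
    (hzero : (∏ t, l 0 t) + (∏ t, l 1 t) + (∏ t, l 2 t) = 0) :
    (∏ t, l 0 t) ^ Fintype.card n * (∏ t, l 2 t) ^ 2 *
        clearedDet (Sum.elim 1 (-1)) (fun i a => D a (Sum.elim (l 0) (l 1) i))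
          (Sum.elim (l 0) (l 1)) =
      (-∏ t, l 2 t) ^ Fintype.card n * (∏ t, l 0 t) ^ 2 *
        clearedDet (Sum.elim 1 (-1)) (fun i a => D a (Sum.elim (l 2) (l 1) i))
          (Sum.elim (l 2) (l 1)) := by
  let φ := algebraMap R (FractionRing R)
  have hφ : Function.Injective φ := IsFractionRing.injective R _
  let y : ∀ i, ι i → FractionRing R := fun i t => φ (l i t)
  let c : ∀ i, ι i → n → FractionRing R := fun i t a => φ (D a (l i t))
  have hy : ∀ i t, y i t ≠ 0 := fun i t => (map_ne_zero_iff φ hφ).2 (hl i t)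
  have hcz : ∀ i t, c i t ⬝ᵥ (fun a => φ (z a)) = y i t := fun i t => by
    simp only [c, y, dotProduct, ← map_mul, ← map_sum, euler]
  have grad : ∀ i a, φ (D a (∏ t, l i t)) = φ (∏ t, l i t) * logGrad 1 (c i) (y i) a :=
    fun i a => by simpa [logGrad] using map_derivation_prod φ (D a) univ (hy i)
  have hess : ∀ i a b, φ (D a (D b (∏ t, l i t))) = φ (∏ t, l i t) *
      (logGrad 1 (c i) (y i) a * logGrad 1 (c i) (y i) b - logHessian 1 (c i) (y i) a b) :=
    fun i a b => by
      simpa [logGrad, logHessian] using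
        map_derivation_derivation_prod φ (D a) (D b) univ (hy i) (hD a b i)
  have hdet := pow_mul_det_sub_eq (h₁ := logGrad 1 (c 0) (y 0))
    (H₁ := logHessian 1 (c 0) (y 0)) (f₁ := φ (∏ t, l 0 t)) (f₂ := φ (∏ t, l 1 t))
    (f₃ := φ (∏ t, l 2 t)) ((map_ne_zero_iff φ hφ).2 (prod_ne_zero_iff.2 fun t _ => hl 0 t))
    (by simp only [← map_add, hzero, map_zero])
    (fun a => by simp only [← grad, ← map_add, hzero, map_zero])
    (fun a b => by simp only [← hess, ← map_add, hzero, map_zero])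
    (logHessian_mulVec 1 (hy 1) (hcz 1)) (logHessian_mulVec 1 (hy 2) (hcz 2))
    (logGrad_dotProduct 1 (hy 1) (hcz 1))
    ((logGrad_dotProduct 1 (hy 2) (hcz 2)).trans (by simp [hcard]))
  have cleared : ∀ i j, φ (clearedDet (Sum.elim 1 (-1)) (fun t a => D a (Sum.elim (l i) (l j) t))
      (Sum.elim (l i) (l j))) = (φ (∏ t, l i t) * φ (∏ t, l j t)) ^ 2 *
        (logHessian 1 (c i) (y i) - logHessian 1 (c j) (y j)).det := fun i j => by
    rw [map_clearedDet, clearedDet_eq_mul_det _ _ (by rintro (t | t); exacts [hy i t, hy j t]),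
      ← logHessian_sumElim_one_neg_one, Fintype.prod_sum_type, map_prod, map_prod]
    congr 3 <;> ext (t | t) <;> rfl
  apply hφ
  simp only [map_mul, map_pow, map_neg, cleared]
  linear_combination (φ (∏ t, l 2 t) ^ 2 * (φ (∏ t, l 0 t) * φ (∏ t, l 1 t)) ^ 2) * hdet

end Derivation

section Flat

variable {K V ι : Type*} [Field K] [AddCommGroup V] [Module K V] [Fintype ι]

open Classical in
/-- The total weight of the vectors of the configuration `x` lying in the subspace `W`. -/
noncomputable def flatWeight (ε : ι → ℤ) (x : ι → V) (W : Submodule K V) : ℤ :=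
  ∑ i with x i ∈ W, ε i

lemma flatWeight_bot (ε : ι → ℤ) {x : ι → V} (hx : ∀ i, x i ≠ 0) :
    flatWeight ε x (⊥ : Submodule K V) = 0 := by
  simp [flatWeight, hx]

open Classical in
lemma flatWeight_sub (ε : ι → ℤ) (x : ι → V) {L W : Submodule K V} (hLW : L ≤ W) :
    flatWeight ε x W - flatWeight ε x L = ∑ i with x i ∈ W ∧ x i ∉ L, ε i := by
  rw [sub_eq_iff_eq_add', flatWeight, flatWeight, ← sum_filter_add_sum_filter_not
    (univ.filter fun i => x i ∈ W) (fun i => x i ∈ L), filter_filter, filter_filter]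
  congr 2
  ext i
  simp only [mem_filter, mem_univ, true_and]
  exact ⟨And.right, fun h => ⟨hLW h, h⟩⟩

open Classical in
/-- The subspaces `span {x i} ⊔ L` partition the vectors outside `L`. -/
lemma flatWeight_sub_eq_sum (ε : ι → ℤ) (x : ι → V) {L W : Submodule K V} (hLW : L ≤ W) :
    flatWeight ε x W - flatWeight ε x L =
      ∑ U ∈ image (fun i => Submodule.span K {x i} ⊔ L) {i | x i ∈ W ∧ x i ∉ L},
        (flatWeight ε x U - flatWeight ε x L) := by
  rw [flatWeight_sub ε x hLW, ← sum_fiberwise_of_maps_to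
    (fun i => mem_image_of_mem fun i => Submodule.span K {x i} ⊔ L)]
  refine sum_congr rfl fun U hU => ?_
  obtain ⟨j, hj, rfl⟩ := mem_image.1 hU
  obtain ⟨hjW, hjL⟩ : x j ∈ W ∧ x j ∉ L := by simpa using hj
  rw [flatWeight_sub ε x le_sup_right, filter_filter]
  congr 1
  ext i
  simp only [mem_filter, mem_univ, true_and]
  constructor
  · rintro ⟨⟨-, hiL⟩, hij⟩
    exact ⟨hij ▸ Submodule.mem_sup_left (Submodule.mem_span_singleton_self _), hiL⟩
  · rintro ⟨hij, hiL⟩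
    have hle : Submodule.span K {x i} ⊔ L ≤ Submodule.span K {x j} ⊔ L :=
      sup_le ((Submodule.span_singleton_le_iff_mem _ _).2 hij) le_sup_right
    have hjle : Submodule.span K {x j} ⊔ L ≤ W :=
      sup_le ((Submodule.span_singleton_le_iff_mem _ _).2 hjW) hLW
    refine ⟨⟨hjle hij, hiL⟩, ((Submodule.covBy_span_singleton_sup hjL).eq_or_eq
      le_sup_right hle).resolve_left fun h => hiL (h ▸ ?_)⟩
    exact Submodule.mem_sup_left (Submodule.mem_span_singleton_self _)

/-- By additivity of the weight, only one flat of `W` can cover `L`. -/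
lemma exists_span_singleton_sup_of_flatWeight_eq (ε : ι → ℤ) (x : ι → V) {L W : Submodule K V}
    (hLW : L ≤ W) (hne : flatWeight ε x L ≠ flatWeight ε x W)
    (heq : ∀ i, x i ∈ W → x i ∉ L →
      flatWeight ε x (Submodule.span K {x i} ⊔ L) = flatWeight ε x W) :
    ∃ i, x i ∈ W ∧ x i ∉ L ∧ ∀ j, x j ∈ W → x j ∈ Submodule.span K {x i} ⊔ L := by
  classical
  set S := image (fun i => Submodule.span K {x i} ⊔ L) {i | x i ∈ W ∧ x i ∉ L} with hS
  have hsum : ∑ U ∈ S, (flatWeight ε x U - flatWeight ε x L) =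
      #S • (flatWeight ε x W - flatWeight ε x L) := by
    refine sum_eq_card_nsmul fun U hU => ?_
    obtain ⟨i, hi, rfl⟩ := mem_image.1 hU
    obtain ⟨hiW, hiL⟩ : x i ∈ W ∧ x i ∉ L := by simpa using hi
    rw [heq i hiW hiL]
  rw [hS, ← flatWeight_sub_eq_sum ε x hLW, ← hS, nsmul_eq_mul] at hsum
  have card_S : #S = 1 := by
    exact_mod_cast (mul_eq_right₀ (sub_ne_zero.2 hne.symm)).1 hsum.symm
  obtain ⟨U, hU⟩ := card_eq_one.1 card_S
  obtain ⟨i, hi, hiU⟩ := mem_image.1 (hU ▸ mem_singleton_self U : U ∈ S)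
  obtain ⟨hiW, hiL⟩ : x i ∈ W ∧ x i ∉ L := by simpa using hi
  refine ⟨i, hiW, hiL, fun j hjW => ?_⟩
  by_cases hjL : x j ∈ L
  · exact Submodule.mem_sup_right hjL
  · have hjU : Submodule.span K {x j} ⊔ L = U := by
      rw [← mem_singleton, ← hU]
      exact mem_image_of_mem _ (by simp [hjW, hjL])
    rw [hiU, ← hjU]
    exact Submodule.mem_sup_left (Submodule.mem_span_singleton_self _)

/-- The flat spanned by `s` is chosen maximal among those whose weight is not that of `t`. -/
lemma exists_flatWeight_ne (ε : ι → ℤ) (x : ι → V) (hx : ∀ i, x i ≠ 0)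
    (hε : ∀ i, flatWeight ε x (Submodule.span K {x i}) ≠ 0) {t : Set ι} (ht : t.Nonempty) :
    ∃ s i, x i ∉ Submodule.span K (x '' s) ∧
      Submodule.span K {x i} ⊔ Submodule.span K (x '' s) = Submodule.span K (x '' t) ∧
      flatWeight ε x (Submodule.span K (x '' s)) ≠ flatWeight ε x (Submodule.span K (x '' t)) := by
  set W := Submodule.span K (x '' t)
  have nonempty : {s : Set ι | Submodule.span K (x '' s) ≤ W ∧
      flatWeight ε x (Submodule.span K (x '' s)) ≠ flatWeight ε x W}.Nonempty := by
    by_cases h : flatWeight ε x W = 0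
    · obtain ⟨i, hi⟩ := ht
      refine ⟨{i}, Submodule.span_mono (Set.image_mono (by simpa using hi)), ?_⟩
      simpa [h] using hε i
    · exact ⟨∅, by simp, by simpa [flatWeight_bot ε hx] using Ne.symm h⟩
  obtain ⟨s, ⟨hsW, hs⟩, hmax⟩ := (Set.toFinite _).exists_maximal nonempty
  set L := Submodule.span K (x '' s)
  have flatWeight_sup : ∀ i, x i ∈ W → x i ∉ L →
      flatWeight ε x (Submodule.span K {x i} ⊔ L) = flatWeight ε x W := by
    intro i hiW hiL
    by_contra h
    rw [← Submodule.span_insert, ← Set.image_insert_eq] at h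
    have hle : Submodule.span K (x '' insert i s) ≤ W := by
      rw [Set.image_insert_eq, Submodule.span_insert]
      exact sup_le ((Submodule.span_singleton_le_iff_mem _ _).2 hiW) hsW
    have his : insert i s ⊆ s := hmax ⟨hle, h⟩ (Set.subset_insert i s)
    exact hiL (Submodule.subset_span (Set.mem_image_of_mem x (his (Set.mem_insert i s))))
  obtain ⟨i, hiW, hiL, hi⟩ := exists_span_singleton_sup_of_flatWeight_eq ε x hsW hs flatWeight_sup
  refine ⟨s, i, hiL, le_antisymm
    (sup_le ((Submodule.span_singleton_le_iff_mem _ _).2 hiW) hsW) (Submodule.span_le.2 ?_), hs⟩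
  rintro _ ⟨j, hj, rfl⟩
  exact hi j (Submodule.subset_span (Set.mem_image_of_mem x hj))

lemma exists_flag_flatWeight_ne (ε : ι → ℤ) (x : ι → V) (hx : ∀ i, x i ≠ 0)
    (hε : ∀ i, flatWeight ε x (Submodule.span K {x i}) ≠ 0) (t : Set ι) :
    ∃ (r : ℕ) (b : Fin r → V), LinearIndependent K b ∧
      Submodule.span K (Set.range b) = Submodule.span K (x '' t) ∧
      ∀ a, flatWeight ε x (Submodule.span K (b '' Set.Ioi a)) ≠
        flatWeight ε x (Submodule.span K (b '' Set.Ici a)) := by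
  induction h : Module.finrank K (Submodule.span K (x '' t)) using Nat.strong_induction_on
    generalizing t with
  | _ d ih =>
    obtain rfl | ht := t.eq_empty_or_nonempty
    · exact ⟨0, Fin.elim0, linearIndependent_empty_type, by simp, Fin.rec0⟩
    obtain ⟨s, i, hi, hspan, hne⟩ := exists_flatWeight_ne ε x hx hε ht
    have hlt : Submodule.span K (x '' s) < Submodule.span K (x '' t) :=
      hspan ▸ (Submodule.covBy_span_singleton_sup hi).lt
    have := FiniteDimensional.span_of_finite K (Set.toFinite (x '' t))
    obtain ⟨r, b, hb, hbs, hflag⟩ := ih _ (h ▸ Submodule.finrank_lt_finrank_of_lt hlt) s rfl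
    have image_cons : ∀ S : Set (Fin (r + 1)), 0 ∉ S →
        Fin.cons (x i) b '' S = b '' (Fin.succ ⁻¹' S) := by
      intro S hS
      ext v
      simp [Fin.exists_fin_succ, hS]
    refine ⟨r + 1, Fin.cons (x i) b, linearIndependent_finCons.2 ⟨hb, hbs ▸ hi⟩, ?_, ?_⟩
    · rw [Fin.range_cons, Submodule.span_insert, hbs, hspan]
    · refine Fin.cases ?_ fun a => ?_
      · have hIoi : Fin.succ ⁻¹' Set.Ioi (0 : Fin (r + 1)) = Set.univ := by ext; simp
        have hIci : Set.Ici (0 : Fin (r + 1)) = Set.univ := by ext; simp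
        rw [image_cons _ (by simp), hIoi, hIci, Set.image_univ, Set.image_univ, Fin.range_cons,
          Submodule.span_insert, hbs, hspan]
        exact hne
      · have hIoi : Fin.succ ⁻¹' Set.Ioi a.succ = Set.Ioi a := by ext; simp
        have hIci : Fin.succ ⁻¹' Set.Ici a.succ = Set.Ici a := by ext; simp
        rw [image_cons _ (by simp), image_cons _ (by simp), hIoi, hIci]
        exact hflag a

lemma exists_coordinates {r : ℕ} {b : Fin r → V} (hb : LinearIndependent K b) :
    ∃ Φ : V →ₗ[K] Fin r → K, ∀ v ∈ Submodule.span K (Set.range b),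
      ∑ a, Φ v a • b a = v ∧ ∀ S, v ∈ Submodule.span K (b '' S) ↔ ∀ a ∉ S, Φ v a = 0 := by
  obtain ⟨Φ, hΦ⟩ := (Fintype.linearCombination K b).exists_leftInverse_of_injective
    (LinearMap.ker_eq_bot.2 (linearIndependent_iff_injective_fintypeLinearCombination.1 hb))
  have apply_sum : ∀ c : Fin r → K, Φ (∑ a, c a • b a) = c := fun c => by
    simpa [Fintype.linearCombination_apply] using LinearMap.congr_fun hΦ c
  refine ⟨Φ, fun v hv => ?_⟩
  obtain ⟨c, rfl⟩ := (Submodule.mem_span_range_iff_exists_fun K).1 hv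
  refine ⟨by rw [apply_sum], fun S => ⟨fun hS a ha => ?_, fun hS => ?_⟩⟩
  · refine Submodule.span_induction (p := fun v _ => Φ v a = 0) ?_ (by simp)
      (fun u w _ _ hu hw => by simp [hu, hw]) (fun k u _ hu => by simp [hu]) hS
    rintro _ ⟨a', ha', rfl⟩
    have hb' : Φ (b a') = Pi.single a' 1 := by
      simpa [Pi.single_apply, ite_smul] using apply_sum (Pi.single a' 1)
    rw [hb', Pi.single_eq_of_ne (by rintro rfl; exact ha ha')]
  · rw [apply_sum] at hS
    refine Submodule.sum_mem _ fun a _ => ?_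
    by_cases ha : a ∈ S
    · exact Submodule.smul_mem _ _ (Submodule.subset_span (Set.mem_image_of_mem b ha))
    · simp [hS a ha]

lemma exists_coordinates_lead (ε : ι → ℤ) (x : ι → V) (hx : ∀ i, x i ≠ 0)
    (hε : ∀ i, flatWeight ε x (Submodule.span K {x i}) ≠ 0) :
    ∃ (r : ℕ) (b : Fin r → V) (Φ : V →ₗ[K] Fin r → K) (lead : ι → Fin r),
      r = Module.finrank K (Submodule.span K (Set.range x)) ∧
      (∀ v ∈ Submodule.span K (Set.range x), ∑ a, Φ v a • b a = v) ∧
      (∀ i, Φ (x i) (lead i) ≠ 0) ∧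
      (∀ i, ∀ a < lead i, Φ (x i) a = 0) ∧ ∀ a, ∑ i with lead i = a, ε i ≠ 0 := by
  obtain ⟨r, b, hb, hspan, hflag⟩ := exists_flag_flatWeight_ne ε x hx hε Set.univ
  rw [Set.image_univ] at hspan
  obtain ⟨Φ, hΦ⟩ := exists_coordinates hb
  have hmem : ∀ i, x i ∈ Submodule.span K (Set.range b) := fun i =>
    hspan ▸ Submodule.subset_span (Set.mem_range_self i)
  have exists_ne : ∀ i, ∃ a, Φ (x i) a ≠ 0 := by
    intro i
    by_contra! h
    exact hx i ((hΦ _ (hmem i)).1.symm.trans (by simp [h]))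
  choose lead hlead hlt using fun i => WellFounded.has_min wellFounded_lt _ (exists_ne i)
  have hzero : ∀ i, ∀ a < lead i, Φ (x i) a = 0 := fun i a ha => by
    by_contra h
    exact hlt i a h ha
  refine ⟨r, b, Φ, lead, ?_, hspan ▸ fun v hv => (hΦ v hv).1, hlead, hzero, fun a => ?_⟩
  · rw [← hspan, finrank_span_eq_card hb, Fintype.card_fin]
  classical
  have hsub := flatWeight_sub ε x (Submodule.span_mono (R := K)
    (Set.image_mono (Set.Ioi_subset_Ici_self (a := a)) : b '' Set.Ioi a ⊆ b '' Set.Ici a))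
  have lead_eq : ∀ i, lead i = a ↔ x i ∈ Submodule.span K (b '' Set.Ici a) ∧
      x i ∉ Submodule.span K (b '' Set.Ioi a) := by
    intro i
    rw [(hΦ _ (hmem i)).2, (hΦ _ (hmem i)).2]
    simp only [Set.mem_Ici, Set.mem_Ioi, not_le, not_lt, not_forall]
    constructor
    · rintro rfl
      exact ⟨hzero i, lead i, le_rfl, hlead i⟩
    · rintro ⟨hge, c, hca, hc⟩
      refine le_antisymm (not_lt.1 fun h => ?_) (not_lt.1 fun h => hlead i (hge _ h))
      exact hc (hzero i c (hca.trans_lt h))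
  simp only [lead_eq, ← hsub]
  exact sub_ne_zero.2 (hflag a).symm

lemma flatWeight_ne_zero_of_forall_eq {ε : ι → ℤ} {x : ι → V} {W : Submodule K V} {k : ℤ}
    (hk : k ≠ 0) {i : ι} (hi : x i ∈ W) (hε : ∀ j, x j ∈ W → ε j = k) :
    flatWeight ε x W ≠ 0 := by
  classical
  rw [flatWeight, sum_congr rfl fun j hj => hε j (mem_filter.1 hj).2, sum_const]
  exact smul_ne_zero (card_ne_zero_of_mem (mem_filter.2 ⟨mem_univ i, hi⟩)) hk

lemma flatWeight_sumElim_span_singleton_ne_zero {κ : Type*} [Fintype κ] {x : ι → V} {y : κ → V}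
    (hxy : ∀ s t, x s ∉ Submodule.span K {y t}) (hyx : ∀ s t, y t ∉ Submodule.span K {x s})
    (i : ι ⊕ κ) : flatWeight (Sum.elim 1 (-1)) (Sum.elim x y)
      (Submodule.span K {Sum.elim x y i}) ≠ 0 := by
  have hi := Submodule.mem_span_singleton_self (R := K) (Sum.elim x y i)
  rcases i with s | t
  · refine flatWeight_ne_zero_of_forall_eq one_ne_zero hi ?_
    exact Sum.rec (fun _ _ => rfl) fun t h => (hyx s t h).elim
  · refine flatWeight_ne_zero_of_forall_eq (neg_ne_zero.2 one_ne_zero) hi ?_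
    exact Sum.rec (fun s h => (hxy s t h).elim) fun _ _ => rfl

end Flat

section Nonvanishing

open Polynomial

variable {K ι : Type*} [Field K] [Fintype ι]

lemma logHessian_single {n : Type*} [DecidableEq n] (ε : ι → ℤ) (lead : ι → n) {y : ι → K}
    (hy : ∀ i, y i ≠ 0) : logHessian ε (fun i => Pi.single (lead i) (y i)) y =
      diagonal fun a => ((∑ i with lead i = a, ε i : ℤ) : K) := by
  ext a b
  rw [logHessian, of_apply, diagonal_apply]
  split_ifs with hab
  · subst hab
    rw [Int.cast_sum, sum_filter]
    refine sum_congr rfl fun i _ => ?_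
    by_cases h : lead i = a
    · subst h
      simp [← sq, hy i]
    · simp [h]
  · refine sum_eq_zero fun i _ => ?_
    by_cases h : lead i = a
    · simp [Pi.single_eq_of_ne' (h.trans_ne hab)]
    · simp [Pi.single_eq_of_ne' h]

variable [DecidableEq ι] {r : ℕ} (ε : ι → ℤ) {c : ι → Fin r → K} {lead : ι → Fin r}

lemma eval_zero_clearedDet_C_mul_X_pow_ne_zero [CharZero K] (hlead : ∀ i, c i (lead i) ≠ 0)
    (hlt : ∀ i, ∀ a < lead i, c i a = 0) (hε : ∀ a, ∑ i with lead i = a, ε i ≠ 0) :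
    (clearedDet ε (fun i a => C (c i a) * X ^ ((a : ℕ) - lead i))
      (fun i => ∑ a, C (c i a) * X ^ ((a : ℕ) - lead i))).eval 0 ≠ 0 := by
  have eval_eq : ∀ i a, (C (c i a) * X ^ ((a : ℕ) - lead i)).eval 0 =
      Pi.single (M := fun _ => K) (lead i) (c i (lead i)) a := by
    intro i a
    rcases lt_trichotomy a (lead i) with h | rfl | h
    · simp [hlt i a h, h.ne]
    · simp
    · have : (a : ℕ) - lead i ≠ 0 := Nat.sub_ne_zero_of_lt h
      simp [h.ne', this]
  rw [← coe_evalRingHom, map_clearedDet]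
  simp only [coe_evalRingHom, eval_finsetSum, eval_eq, sum_pi_single', mem_univ, if_true]
  rw [clearedDet_eq_mul_det _ _ hlead, logHessian_single _ _ hlead, det_diagonal]
  exact mul_ne_zero (pow_ne_zero _ (prod_ne_zero_iff.2 fun i _ => hlead i))
    (prod_ne_zero_iff.2 fun a _ => Int.cast_ne_zero.2 (hε a))

/-- Along the curve `X ↦ ∑ X ^ a • b a` the rescaled logarithmic Hessian becomes diagonal at
`X = 0`, the entries being the jumps of the weight. -/
lemma clearedDet_C_mul_X_pow_ne_zero [CharZero K] (hlead : ∀ i, c i (lead i) ≠ 0)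
    (hlt : ∀ i, ∀ a < lead i, c i a = 0) (hε : ∀ a, ∑ i with lead i = a, ε i ≠ 0) :
    clearedDet ε (fun i a => C (c i a)) (fun i => ∑ a, C (c i a) * X ^ (a : ℕ)) ≠ 0 := by
  set c' : ι → Fin r → K[X] := fun i a => C (c i a) * X ^ ((a : ℕ) - lead i) with hc'
  have factor : ∀ i a, C (c i a) * X ^ (a : ℕ) = X ^ (lead i : ℕ) * c' i a := by
    intro i a
    rcases lt_or_ge a (lead i) with h | h
    · simp [hc', hlt i a h]
    · rw [hc', mul_left_comm, ← pow_add, Nat.add_sub_cancel' h]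
  have rescale : (∏ a : Fin r, X ^ (a : ℕ)) ^ 2 *
      clearedDet ε (fun i a => C (c i a)) (fun i => ∑ a, C (c i a) * X ^ (a : ℕ)) =
      (∏ i, X ^ (lead i : ℕ)) ^ 2 * clearedDet ε c' fun i => ∑ a, c' i a := by
    have scale_cols := clearedDet_scale ε (fun i a => C (c i a))
      (fun i => ∑ a, C (c i a) * X ^ (a : ℕ)) 1 (fun a => X ^ (a : ℕ))
    have scale_rows := clearedDet_scale ε c' (fun i => ∑ a, c' i a) (fun i => X ^ (lead i : ℕ)) 1
    simp only [Pi.one_apply, one_mul, mul_one, prod_const_one, one_pow] at scale_cols scale_rows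
    rw [← scale_cols, ← scale_rows]
    simp only [factor, mul_sum]
  refine right_ne_zero_of_mul (a := (∏ a : Fin r, X ^ (a : ℕ)) ^ 2) ?_
  rw [rescale]
  exact mul_ne_zero (pow_ne_zero _ (prod_ne_zero_iff.2 fun i _ => pow_ne_zero _ X_ne_zero))
    fun h => eval_zero_clearedDet_C_mul_X_pow_ne_zero ε hlead hlt hε (by rw [h, eval_zero])

end Nonvanishing

section LinearForm

open MvPolynomial

variable {R K σ : Type*} [CommRing R] [Field K]

lemma map_eq_of_isHomogeneous_one {M : Type*} [AddCommGroup M] [Module R M]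
    {f g : MvPolynomial σ R →ₗ[R] M} (h : ∀ j, f (X j) = g (X j)) {p : MvPolynomial σ R}
    (hp : p.IsHomogeneous 1) : f p = g p := by
  have hspan : p ∈ Submodule.span R (Set.range X) := by
    rw [← homogeneousSubmodule_one_eq_span_X]
    exact hp
  refine LinearMap.eqOn_span ?_ hspan
  rintro _ ⟨j, rfl⟩
  exact h j

lemma aeval_eq_of_isHomogeneous_one {A : Type*} [CommRing A] [Algebra R A]
    (Ψ : MvPolynomial σ R →ₗ[R] A) {p : MvPolynomial σ R} (hp : p.IsHomogeneous 1) :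
    aeval (fun j => Ψ (X j)) p = Ψ p :=
  map_eq_of_isHomogeneous_one (f := (aeval fun j => Ψ (X j)).toLinearMap) (by simp) hp

/-- The derivation with constant coefficients that acts on linear forms as the functional `Φ`. -/
noncomputable def constDerivation (Φ : MvPolynomial σ R →ₗ[R] R) :
    Derivation R (MvPolynomial σ R) (MvPolynomial σ R) :=
  mkDerivation R fun j => C (Φ (X j))

lemma constDerivation_of_isHomogeneous_one (Φ : MvPolynomial σ R →ₗ[R] R)
    {p : MvPolynomial σ R} (hp : p.IsHomogeneous 1) : constDerivation Φ p = C (Φ p) :=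
  map_eq_of_isHomogeneous_one (f := (constDerivation Φ : MvPolynomial σ R →ₗ[R] MvPolynomial σ R))
    (g := Algebra.linearMap R _ ∘ₗ Φ) (by simp [constDerivation, algebraMap_eq]) hp

lemma isHomogeneous_prod {ι : Type*} [Fintype ι] {l : ι → MvPolynomial σ R}
    (hl : ∀ i, (l i).IsHomogeneous 1) : (∏ i, l i).IsHomogeneous (Fintype.card ι) := by
  simpa using IsHomogeneous.prod univ l (fun _ => 1) fun i _ => hl i

lemma eq_or_eq_of_isHomogeneous_of_add_add_eq_zero {F G H : MvPolynomial σ R} {a b c : ℕ}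
    (hF : F.IsHomogeneous a) (hG : G.IsHomogeneous b) (hH : H.IsHomogeneous c) (hne : F ≠ 0)
    (hzero : F + G + H = 0) : a = b ∨ a = c := by
  by_contra! h
  have hcomponent := congrArg (homogeneousComponent a) hzero
  simp only [map_add, map_zero, homogeneousComponent_of_mem hF, homogeneousComponent_of_mem hG,
    homogeneousComponent_of_mem hH, if_true, h.1, h.2, if_false, add_zero] at hcomponent
  exact hne hcomponent

lemma not_isUnit_of_isHomogeneous_one [Nontrivial R] {p : MvPolynomial σ R}
    (hp : p.IsHomogeneous 1) : ¬IsUnit p := fun h =>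
  (h.map constantCoeff).ne_zero (hp.coeff_eq_zero (by simp))

lemma notMem_span_singleton_of_isRelPrime [Nontrivial R] {ι κ : Type*} [Fintype ι] [Fintype κ]
    {l : ι → MvPolynomial σ R} {m : κ → MvPolynomial σ R} (hl : ∀ i, (l i).IsHomogeneous 1)
    (hcop : IsRelPrime (∏ i, l i) (∏ i, m i)) (i : ι) (j : κ) :
    m j ∉ Submodule.span R {l i} := by
  intro h
  obtain ⟨k, hk⟩ := Submodule.mem_span_singleton.1 h
  have hdvd : l i ∣ m j := hk ▸ smul_eq_C_mul (l i) k ▸ dvd_mul_left _ _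
  exact not_isUnit_of_isHomogeneous_one (hl i)
    (hcop (dvd_prod_of_mem l (mem_univ i)) (hdvd.trans (dvd_prod_of_mem m (mem_univ j))))

lemma le_five_of_pow_dvd_sq_mul [IsDomain R] {F P : MvPolynomial σ R} {d r : ℕ}
    (hF : F.IsHomogeneous d) (hP : P.IsHomogeneous (2 * (2 * d - r))) (hF₀ : F ≠ 0) (hP₀ : P ≠ 0)
    (hrd : r ≤ 2 * d) (hdvd : F ^ r ∣ F ^ 2 * P) : r ≤ 5 := by
  have hdeg : d * r ≤ d * 2 + 2 * (2 * d - r) := by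
    have hle := totalDegree_le_of_dvd_of_isDomain hdvd
      (mul_ne_zero (pow_ne_zero 2 hF₀) hP₀)
    rwa [(hF.pow r).totalDegree (pow_ne_zero r hF₀),
      ((hF.pow 2).mul hP).totalDegree (mul_ne_zero (pow_ne_zero 2 hF₀) hP₀)] at hle
  by_contra! h
  have hmul : d * 6 ≤ d * r := Nat.mul_le_mul_left d h
  lia

lemma mem_span_range_of_dvd_prod_add_prod {ι κ : Type*} [Fintype ι] [Fintype κ]
    {l : ι → MvPolynomial σ K} {m : κ → MvPolynomial σ K} (hl : ∀ i, (l i).IsHomogeneous 1)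
    (hm : ∀ i, (m i).IsHomogeneous 1) (hne : ∏ i, l i + ∏ i, m i ≠ 0)
    {p : MvPolynomial σ K} (hp : p.IsHomogeneous 1) (hdvd : p ∣ ∏ i, l i + ∏ i, m i) :
    p ∈ Submodule.span K (Set.range (Sum.elim l m)) := by
  by_contra hmem
  obtain ⟨Φ, hΦp, hΦ⟩ := Submodule.exists_dual_map_eq_bot_of_notMem hmem inferInstance
  set Ψ : MvPolynomial σ K →ₗ[K] MvPolynomial σ K :=
    LinearMap.id - ((Φ p)⁻¹ • Φ).smulRight p with hΨ
  have hΨlm : ∀ i, Ψ (Sum.elim l m i) = Sum.elim l m i := by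
    intro i
    have hi : Φ (Sum.elim l m i) = 0 := by
      rw [← Submodule.mem_bot K, ← hΦ]
      exact Submodule.mem_map_of_mem (Submodule.subset_span (Set.mem_range_self i))
    simp [hΨ, hi]
  have hΨp : Ψ p = 0 := by simp [hΨ, hΦp]
  have hfix : aeval (fun j => Ψ (X j)) (∏ i, l i + ∏ i, m i) = ∏ i, l i + ∏ i, m i := by
    simp only [map_add, map_prod, aeval_eq_of_isHomogeneous_one Ψ (hl _),
      aeval_eq_of_isHomogeneous_one Ψ (hm _)]
    exact congrArg₂ (· + ·) (prod_congr rfl fun i _ => hΨlm (Sum.inl i))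
      (prod_congr rfl fun i _ => hΨlm (Sum.inr i))
  have hdvd' := map_dvd (aeval fun j => Ψ (X j)) hdvd
  rw [hfix, aeval_eq_of_isHomogeneous_one Ψ hp, hΨp, zero_dvd_iff] at hdvd'
  exact hne hdvd'

lemma clearedDet_C_ne_zero [CharZero K] {ι : Type*} [Fintype ι] [DecidableEq ι] {r : ℕ}
    (ε : ι → ℤ) {l : ι → MvPolynomial σ K} (hl : ∀ i, (l i).IsHomogeneous 1)
    (Φ : MvPolynomial σ K →ₗ[K] Fin r → K) {lead : ι → Fin r}
    (hlead : ∀ i, Φ (l i) (lead i) ≠ 0) (hlt : ∀ i, ∀ a < lead i, Φ (l i) a = 0)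
    (hε : ∀ a, ∑ i with lead i = a, ε i ≠ 0) :
    clearedDet ε (fun i a => C (Φ (l i) a)) l ≠ 0 := by
  let Ψ : MvPolynomial σ K →ₗ[K] Polynomial K :=
    Fintype.linearCombination K (fun a : Fin r => Polynomial.X ^ (a : ℕ)) ∘ₗ Φ
  have hΨ : ∀ i, aeval (fun j => Ψ (X j)) (l i) =
      ∑ a, Polynomial.C (Φ (l i) a) * Polynomial.X ^ (a : ℕ) := fun i => by
    rw [aeval_eq_of_isHomogeneous_one Ψ (hl i)]
    simp [Ψ, Fintype.linearCombination_apply, Polynomial.smul_eq_C_mul]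
  intro h
  refine clearedDet_C_mul_X_pow_ne_zero ε hlead hlt hε ?_
  have hmap := congrArg (aeval (R := K) fun j => Ψ (X j)).toRingHom h
  rw [map_clearedDet, map_zero] at hmap
  simpa [hΨ] using hmap

end LinearForm

section SumZero

open MvPolynomial

variable {K σ : Type*} [Field K] {ι : Fin 3 → Type*} [∀ i, Fintype (ι i)]
  {l : ∀ i, ι i → MvPolynomial σ K}

lemma card_eq_of_prod_sum_eq_zero (hne : ∀ i j, l i j ≠ 0) (hhom : ∀ i j, (l i j).IsHomogeneous 1)
    (hzero : (∏ t, l 0 t) + (∏ t, l 1 t) + (∏ t, l 2 t) = 0) :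
    Fintype.card (ι 1) = Fintype.card (ι 0) ∧ Fintype.card (ι 2) = Fintype.card (ι 0) := by
  have hF : ∀ i, (∏ t, l i t).IsHomogeneous (Fintype.card (ι i)) := fun i =>
    isHomogeneous_prod (hhom i)
  have hF₀ : ∀ i, ∏ t, l i t ≠ 0 := fun i => prod_ne_zero_iff.2 fun t _ => hne i t
  have h₀ := eq_or_eq_of_isHomogeneous_of_add_add_eq_zero (hF 0) (hF 1) (hF 2) (hF₀ 0) hzero
  have h₁ := eq_or_eq_of_isHomogeneous_of_add_add_eq_zero (hF 1) (hF 2) (hF 0) (hF₀ 1)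
    (by rw [← hzero]; ring)
  have h₂ := eq_or_eq_of_isHomogeneous_of_add_add_eq_zero (hF 2) (hF 0) (hF 1) (hF₀ 2)
    (by rw [← hzero]; ring)
  lia

lemma mem_span_range_of_prod_sum_eq_zero (hne : ∀ i j, l i j ≠ 0)
    (hhom : ∀ i j, (l i j).IsHomogeneous 1)
    (hzero : (∏ t, l 0 t) + (∏ t, l 1 t) + (∏ t, l 2 t) = 0) (i : Fin 3) (j : ι i) :
    l i j ∈ Submodule.span K (Set.range (Sum.elim (l 0) (l 1))) := by
  match i, j with
  | 0, j => exact Submodule.subset_span ⟨Sum.inl j, rfl⟩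
  | 1, j => exact Submodule.subset_span ⟨Sum.inr j, rfl⟩
  | 2, j =>
    have hsum : ∏ t, l 0 t + ∏ t, l 1 t = -∏ t, l 2 t := eq_neg_of_add_eq_zero_left hzero
    refine mem_span_range_of_dvd_prod_add_prod (hhom 0) (hhom 1) ?_ (hhom 2 j) ?_
    · exact hsum ▸ neg_ne_zero.2 (prod_ne_zero_iff.2 fun t _ => hne 2 t)
    · exact hsum ▸ (dvd_prod_of_mem (l 2) (mem_univ j)).neg_right

lemma isRelPrime_of_add_add_eq_zero {R : Type*} [CommRing R] {F G H : R} (hcop : IsRelPrime F G)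
    (hzero : F + G + H = 0) : IsRelPrime H F := by
  intro g hH hF
  refine hcop hF ?_
  have hG : G = -(F + H) := by linear_combination hzero
  exact hG ▸ (dvd_add hF hH).neg_right

lemma prod_pow_dvd_sq_mul_clearedDet [∀ i, DecidableEq (ι i)] {r : ℕ} (hne : ∀ i j, l i j ≠ 0)
    (hhom : ∀ i j, (l i j).IsHomogeneous 1) (hcop : IsRelPrime (∏ t, l 0 t) (∏ t, l 1 t))
    (hzero : (∏ t, l 0 t) + (∏ t, l 1 t) + (∏ t, l 2 t) = 0)
    {b : Fin r → MvPolynomial σ K} {Φ : MvPolynomial σ K →ₗ[K] Fin r → K}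
    (hb : ∀ v ∈ Submodule.span K (Set.range (Sum.elim (l 0) (l 1))), ∑ a, Φ v a • b a = v) :
    (∏ t, l 2 t) ^ r ∣ (∏ t, l 2 t) ^ 2 * clearedDet (Sum.elim 1 (-1))
      (fun i a => C (Φ (Sum.elim (l 0) (l 1) i) a)) (Sum.elim (l 0) (l 1)) := by
  let D : Fin r → Derivation K (MvPolynomial σ K) (MvPolynomial σ K) := fun a =>
    constDerivation (LinearMap.proj a ∘ₗ Φ)
  have D_apply : ∀ {p : MvPolynomial σ K}, p.IsHomogeneous 1 → ∀ a, D a p = C (Φ p a) :=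
    fun hp a => constDerivation_of_isHomogeneous_one _ hp
  have hlm : ∀ i, (Sum.elim (l 0) (l 1) i).IsHomogeneous 1 := by
    rintro (t | t); exacts [hhom 0 t, hhom 1 t]
  obtain ⟨card₁, card₂⟩ := card_eq_of_prod_sum_eq_zero hne hhom hzero
  have euler : ∀ i j, ∑ a, D a (l i j) * b a = l i j := fun i j => by
    simpa only [D_apply (hhom i j), ← smul_eq_C_mul] using
      hb _ (mem_span_range_of_prod_sum_eq_zero hne hhom hzero i j)
  have hdet := pow_mul_clearedDet_eq D b l hne (fun a b i j => by simp [D_apply (hhom i j)])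
    euler (card₁.trans card₂.symm) hzero
  simp only [D_apply (hlm _), Fintype.card_fin, mul_assoc] at hdet
  refine (isRelPrime_of_add_add_eq_zero hcop hzero).pow (n := r).dvd_of_dvd_mul_left ?_
  rw [hdet]
  exact (pow_dvd_pow_of_dvd (dvd_neg.2 dvd_rfl) r).mul_right _

theorem finrank_span_range_sumElim_le_five [CharZero K] (hne : ∀ i j, l i j ≠ 0)
    (hhom : ∀ i j, (l i j).IsHomogeneous 1) (hcop : IsRelPrime (∏ t, l 0 t) (∏ t, l 1 t))
    (hzero : (∏ t, l 0 t) + (∏ t, l 1 t) + (∏ t, l 2 t) = 0) :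
    Module.finrank K (Submodule.span K (Set.range (Sum.elim (l 0) (l 1)))) ≤ 5 := by
  classical
  have hlm : ∀ i, (Sum.elim (l 0) (l 1) i).IsHomogeneous 1 := by
    rintro (t | t); exacts [hhom 0 t, hhom 1 t]
  obtain ⟨r, b, Φ, lead, hr, hb, hlead, hlt, hε⟩ :=
    exists_coordinates_lead (K := K) (Sum.elim 1 (-1)) (Sum.elim (l 0) (l 1))
      (by rintro (t | t); exacts [hne 0 t, hne 1 t])
      (flatWeight_sumElim_span_singleton_ne_zero
        (fun s t => notMem_span_singleton_of_isRelPrime (hhom 1) hcop.symm t s)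
        (notMem_span_singleton_of_isRelPrime (hhom 0) hcop))
  rw [← hr]
  obtain ⟨card₁, card₂⟩ := card_eq_of_prod_sum_eq_zero hne hhom hzero
  have card_sum : Fintype.card (ι 0 ⊕ ι 1) = 2 * Fintype.card (ι 2) := by
    rw [Fintype.card_sum, card₁, card₂, two_mul]
  have hdet := clearedDet_C_ne_zero _ hlm Φ hlead hlt hε
  have hdeg := isHomogeneous_clearedDet (Sum.elim 1 (-1))
    (fun i => Φ (Sum.elim (l 0) (l 1) i)) hlm
  have hrd := card_le_of_clearedDet_ne_zero hdet
  rw [Fintype.card_fin, card_sum] at hdeg hrd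
  exact le_five_of_pow_dvd_sq_mul (isHomogeneous_prod (hhom 2)) hdeg
    (prod_ne_zero_iff.2 fun t _ => hne 2 t) hdet hrd
    (prod_pow_dvd_sq_mul_clearedDet hne hhom hcop hzero hb)

end SumZero

end LinearFactors

open LinearFactors in
theorem span_of_factors_dim_le_five_of_coprime_sum_zero_general {K σ : Type*} [Field K]
    [CharZero K] {ι : Fin 3 → Type*} [∀ i, Fintype (ι i)] (l : ∀ i, ι i → MvPolynomial σ K)
    (hne : ∀ i j, l i j ≠ 0) (hhom : ∀ i j, (l i j).IsHomogeneous 1)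
    (hcop : IsRelPrime (∏ t, l 0 t) (∏ t, l 1 t))
    (hzero : (∏ t, l 0 t) + (∏ t, l 1 t) + (∏ t, l 2 t) = 0) :
    Module.finrank K (Submodule.span K {p | ∃ i j, p = l i j}) ≤ 5 := by
  have := FiniteDimensional.span_of_finite K (Set.finite_range (Sum.elim (l 0) (l 1)))
  refine (Submodule.finrank_mono (Submodule.span_le.2 ?_)).trans
    (finrank_span_range_sumElim_le_five hne hhom hcop hzero)
  rintro _ ⟨i, j, rfl⟩
  exact mem_span_range_of_prod_sum_eq_zero hne hhom hzero i j

/-- If `F₁, F₂, F₃ ∈ ℂ[x₀, …, xₙ]` are pairwise coprime products of non-zero homogeneous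
linear polynomials with `F₁ + F₂ + F₃ = 0`, then the `ℂ`-linear span of all the linear
factors has dimension at most `5`; equivalently the corresponding projective points lie
in a projective subspace of dimension at most `4`. -/
theorem span_of_factors_dim_le_five_of_coprime_sum_zero
    (n : ℕ) (d : Fin 3 → ℕ)
    (l : (i : Fin 3) → Fin (d i) → MvPolynomial (Fin (n + 1)) ℂ)
    (hne : ∀ i j, l i j ≠ 0) (hhom : ∀ i j, (l i j).IsHomogeneous 1)
    (hcop : ∀ i j, i ≠ j →
      ∀ g : MvPolynomial (Fin (n + 1)) ℂ, g ∣ (∏ t, l i t) → g ∣ (∏ t, l j t) → IsUnit g)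
    (hzero : (∏ t, l 0 t) + (∏ t, l 1 t) + (∏ t, l 2 t) = 0) :
    Module.finrank ℂ
      ↥(Submodule.span ℂ
        {p : MvPolynomial (Fin (n + 1)) ℂ | ∃ i j, p = l i j}) ≤ 5 :=
  span_of_factors_dim_le_five_of_coprime_sum_zero_general l hne hhom (hcop 0 1 (by decide)) hzero
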